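/- Let (W, S) be a finite Coxeter system, B⁺ its Artin–Tits monoid with Garside element Δ, and I ⊆ S. Let w ∈ B⁺ be such that no element of I left-divides w and for every s ∈ I there exists t ∈ S with s·w = w·t, and let v ∈ B_I⁺. If a is a left gcd of v and Δ and c is a left gcd of w and Δ, then a·c is a left gcd of v·w and Δ. -/

import Mathlib

/-!
The simple elements of the Artin–Tits monoid are the lifts of elements of `W` along reduced words;
by Matsumoto's theorem the lift is well defined, and divisibility between simple elements is the
weak order. When `W` is finite the simple elements are the divisors of `Δ`, so the left gcd of `x`
and `Δ` is the lift of the head of `x`, its greatest prefix in `W`. Heads exist without any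
finiteness: among the prefixes `z` of `y` for which `u * z` is length additive there is a greatest
one, `m`, and `y ↦ u * m`, for `u` a generator, defines an action of the monoid on `W` whose orbit
map at `1` is the head.

Let `C` be the head of `w`. The hypotheses on `w` pass to `C`: it is the minimal element of the
coset `W_I C` and conjugates the generators of `W_I` to generators. Hence `p ↦ p * C` identifies
`W_I` with a convex subset of the weak order, so for `u` and `A` in `W_I` the greatest prefix `m`
for `u` and `A * C` is the one for `u` and `A`, times `C`. Therefore `v` sends `C` to the head of
`v` times `C`.
-/

/-- The alternating word `s t s t ⋯` of length `m`, starting with `s`. -/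
def altWord {B : Type*} (s t : B) : ℕ → List B
  | 0 => []
  | n + 1 => s :: altWord t s n

/-- The braid congruence on the free monoid over `B` associated to a Coxeter matrix `M`:
the congruence generated by the braid relations, identifying the alternating words
`s t s ⋯` and `t s t ⋯` of length `M s t` whenever `s ≠ t` and `M s t < ∞`
(infinity being encoded by the entry `0`). -/
def braidCon {B : Type*} (M : CoxeterMatrix B) : Con (FreeMonoid B) :=
  conGen (fun a b => ∃ s t : B, s ≠ t ∧ M s t ≠ 0 ∧
    a = FreeMonoid.ofList (altWord s t (M s t)) ∧
    b = FreeMonoid.ofList (altWord t s (M s t)))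

/-- The Artin–Tits monoid of a Coxeter matrix `M`: the quotient of the free monoid
on `B` by the braid relations. -/
def ArtinTitsMonoid {B : Type*} (M : CoxeterMatrix B) : Type _ :=
  (braidCon M).Quotient

instance {B : Type*} (M : CoxeterMatrix B) : Monoid (ArtinTitsMonoid M) :=
  inferInstanceAs (Monoid (braidCon M).Quotient)

/-- The image in the Artin–Tits monoid of a generator. -/
def ArtinTitsMonoid.of {B : Type*} (M : CoxeterMatrix B) (s : B) : ArtinTitsMonoid M :=
  (braidCon M).mk' (FreeMonoid.of s)

/-- `d` is a left gcd of `x` and `y`. -/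
def IsLeftGcd {N : Type*} [Monoid N] (x y d : N) : Prop :=
  (∃ u, x = d * u) ∧ (∃ u, y = d * u) ∧
    ∀ e, (∃ u, x = e * u) → (∃ u, y = e * u) → ∃ u, d = e * u

namespace ArtinTits

section Reflections

open Module

variable {K V : Type*} [Field K] [AddCommGroup V] [Module K V] {f g : Dual K V} {x y : V} {q : K}

theorem reflection_mul_reflection_smul_add (hf : f x = 2) (hg : g y = 2) (hq : q ≠ 0)
    (hfy : f y = -(q + q⁻¹)) (hgx : g x = -(q + q⁻¹)) :
    (reflection hf * reflection hg) (q • x + y) = q ^ 2 • (q • x + y) := by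
  simp only [LinearEquiv.mul_apply, reflection_apply, map_sub, map_add, map_smul, hf, hg, hfy, hgx]
  match_scalars <;> field_simp <;> ring

theorem reflection_mul_reflection_pow_smul_add (hf : f x = 2) (hg : g y = 2) (hq : q ≠ 0)
    (hfy : f y = -(q + q⁻¹)) (hgx : g x = -(q + q⁻¹)) (k : ℕ) :
    ((reflection hf * reflection hg) ^ k) (q • x + y) = (q ^ 2) ^ k • (q • x + y) := by
  induction k with
  | zero => simp
  | succ k ih =>
    rw [pow_succ, LinearEquiv.mul_apply, reflection_mul_reflection_smul_add hf hg hq hfy hgx,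
      map_smul, ih, smul_smul, ← pow_succ']

theorem reflection_mul_reflection_pow_of_apply_eq_zero (hf : f x = 2) (hg : g y = 2) {z : V}
    (hfz : f z = 0) (hgz : g z = 0) (k : ℕ) : ((reflection hf * reflection hg) ^ k) z = z := by
  induction k with
  | zero => rfl
  | succ k ih =>
    rw [pow_succ, LinearEquiv.mul_apply, LinearEquiv.mul_apply, reflection_apply z hg, hgz,
      zero_smul, sub_zero, reflection_apply z hf, hfz, zero_smul, sub_zero, ih]

theorem sub_inv_ne_zero_of_sq_ne_one (hq : q ≠ 0) (hq2 : q ^ 2 ≠ 1) : q - q⁻¹ ≠ 0 := by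
  rwa [sub_ne_zero, Ne, ← mul_eq_one_iff_eq_inv₀ hq, ← sq]

-- `q • x + y` and `q⁻¹ • x + y` are eigenvectors of the product with eigenvalues `q ^ 2` and
-- `q ^ (-2)`, and together with the common kernel of `f` and `g` they span `V`.
theorem orderOf_reflection_mul_reflection (hf : f x = 2) (hg : g y = 2) (hq : q ≠ 0)
    (hq2 : q ^ 2 ≠ 1) (hfy : f y = -(q + q⁻¹)) (hgx : g x = -(q + q⁻¹)) :
    orderOf (reflection hf * reflection hg) = orderOf (q ^ 2) := by
  have hd := sub_inv_ne_zero_of_sq_ne_one hq hq2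
  have eigen := reflection_mul_reflection_pow_smul_add hf hg hq hfy hgx
  refine orderOf_eq_orderOf_iff.mpr fun k => ⟨fun h => ?_, fun h => ?_⟩
  · have hfv : f (q • x + y) = q - q⁻¹ := by
      simp only [map_add, map_smul, hf, hfy, smul_eq_mul]; ring
    have := congrArg f (eigen k)
    rw [h, LinearEquiv.coe_one, id_eq, map_smul, hfv, smul_eq_mul] at this
    exact mul_right_cancel₀ hd (by rw [one_mul, ← this])
  · have eigen' := reflection_mul_reflection_pow_smul_add hf hg (inv_ne_zero hq)
      (by rw [hfy, inv_inv, add_comm]) (by rw [hgx, inv_inv, add_comm]) k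
    specialize eigen k
    rw [h, one_smul] at eigen
    rw [inv_pow, inv_pow, h, inv_one, one_smul] at eigen'
    ext z
    let a := -(g z / (q - q⁻¹) + q⁻¹ * (f z / (q - q⁻¹))) / (q - q⁻¹)
    let b := -(g z / (q - q⁻¹) + q * (f z / (q - q⁻¹))) / (q - q⁻¹)
    have hd2 : q ^ 2 - 1 ≠ 0 := sub_ne_zero.mpr hq2
    have fixed := reflection_mul_reflection_pow_of_apply_eq_zero hf hg
      (z := z - a • (q • x + y) - b • (q⁻¹ • x + y))
      (by simp only [a, b, map_sub, map_add, map_smul, hf, hfy, smul_eq_mul]; field_simp; ring)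
      (by simp only [a, b, map_sub, map_add, map_smul, hg, hgx, smul_eq_mul]; field_simp; ring) k
    simpa only [map_sub, map_smul, eigen, eigen', sub_left_inj, LinearEquiv.coe_one, id_eq]
      using fixed

end Reflections

section Order

variable {B : Type*} (M : CoxeterMatrix B)

/-- A complex number whose square has multiplicative order `m`, where order `0` means infinite
order. -/
noncomputable def halfRoot (m : ℕ) : ℂ :=
  if m = 0 then 2 else Complex.exp (Real.pi * Complex.I / m)

theorem halfRoot_ne_zero (m : ℕ) : halfRoot m ≠ 0 := by
  unfold halfRoot
  split_ifs
  · exact two_ne_zero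
  · exact Complex.exp_ne_zero _

theorem orderOf_halfRoot_sq (m : ℕ) : orderOf (halfRoot m ^ 2) = m := by
  unfold halfRoot
  split_ifs with hm
  · subst hm
    refine orderOf_eq_zero_iff'.mpr fun k hk h => ?_
    have : ((4 ^ k : ℕ) : ℂ) = 1 := by rw [← h]; norm_num
    exact hk.ne' (by simpa [Nat.pow_eq_one] using Nat.cast_eq_one.mp this)
  · rw [← Complex.exp_nat_mul]
    have hexp : ((2 : ℕ) : ℂ) * (Real.pi * Complex.I / m) = 2 * Real.pi * Complex.I / m := by
      push_cast
      ring
    rw [hexp, ← (Complex.isPrimitiveRoot_exp m hm).eq_orderOf]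

theorem halfRoot_one : halfRoot 1 = -1 := by
  simp [halfRoot]

/-- The Cartan matrix `-2 cos (π / m)` of a Coxeter matrix, with complex entries; the product of
the reflections attached to a pair with `m = ∞` still has infinite order because the entry there is
`-5 / 2` instead of `-2`. -/
noncomputable def cartanMatrix (i j : B) : ℂ := -(halfRoot (M i j) + (halfRoot (M i j))⁻¹)

theorem cartanMatrix_self (i : B) : LinearMap.proj (R := ℂ) (φ := fun _ : B => ℂ) i
    (cartanMatrix M i) = 2 := by
  simp only [LinearMap.proj_apply, cartanMatrix, M.diagonal, halfRoot_one]
  norm_num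

/-- The reflection by which a generator acts in the (dual) geometric representation. -/
noncomputable def geometricReflection (i : B) : (B → ℂ) ≃ₗ[ℂ] (B → ℂ) :=
  Module.reflection (cartanMatrix_self M i)

theorem orderOf_geometricReflection_mul (i j : B) :
    orderOf (geometricReflection M i * geometricReflection M j) = M i j := by
  rcases eq_or_ne i j with rfl | hij
  · have hsq : geometricReflection M i * geometricReflection M i = 1 :=
      LinearEquiv.ext (Module.involutive_reflection (cartanMatrix_self M i))
    rw [hsq, orderOf_one, M.diagonal]
  · have hsq : halfRoot (M i j) ^ 2 ≠ 1 := fun h =>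
      M.off_diagonal i j hij (by rw [← orderOf_halfRoot_sq (M i j), h, orderOf_one])
    refine (orderOf_reflection_mul_reflection _ _ (halfRoot_ne_zero _) hsq ?_ rfl).trans
      (orderOf_halfRoot_sq _)
    rw [M.symmetric i j]
    rfl

theorem isLiftable_geometricReflection : M.IsLiftable (geometricReflection M) := fun i j => by
  rw [← orderOf_geometricReflection_mul M i j, pow_orderOf_eq_one]

variable {M} {W : Type*} [Group W] (cs : CoxeterSystem M W)

theorem orderOf_simple_mul_simple (i j : B) : orderOf (cs.simple i * cs.simple j) = M i j := by
  refine Nat.dvd_antisymm (orderOf_dvd_of_pow_eq_one (cs.simple_mul_simple_pow i j)) ?_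
  have h := orderOf_map_dvd (cs.lift ⟨_, isLiftable_geometricReflection M⟩)
    (cs.simple i * cs.simple j)
  rwa [map_mul, cs.lift_apply_simple, cs.lift_apply_simple,
    orderOf_geometricReflection_mul] at h

end Order

section AltWord

variable {B : Type*} {M : CoxeterMatrix B} {W : Type*} [Group W] (cs : CoxeterSystem M W)

theorem length_altWord (i j : B) (k : ℕ) : (altWord i j k).length = k := by
  induction k generalizing i j with
  | zero => rfl
  | succ k ih => simp only [altWord, List.length_cons, ih]

theorem mem_altWord (i j : B) (k : ℕ) : ∀ l ∈ altWord i j k, l = i ∨ l = j := by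
  induction k generalizing i j with
  | zero => simp [altWord]
  | succ k ih => simpa [altWord, or_comm] using ih j i

theorem altWord_eq_reverse_alternatingWord (i j : B) (k : ℕ) :
    altWord i j k = (CoxeterSystem.alternatingWord j i k).reverse := by
  induction k generalizing i j with
  | zero => rfl
  | succ k ih => simp [altWord, ih, CoxeterSystem.alternatingWord]

theorem wordProd_altWord_comm (i j : B) :
    cs.wordProd (altWord i j (M i j)) = cs.wordProd (altWord j i (M i j)) := by
  have h := cs.wordProd_braidWord_eq j i
  rw [CoxeterSystem.braidWord, CoxeterSystem.braidWord, M.symmetric j i] at h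
  rw [altWord_eq_reverse_alternatingWord, altWord_eq_reverse_alternatingWord,
    cs.wordProd_reverse, cs.wordProd_reverse, h]

theorem prod_map_reverse_altWord {N : Type*} [Monoid N] (f : B → N) (i j : B) (k : ℕ) :
    ((altWord j i (2 * k)).reverse.map f).prod = (f i * f j) ^ k := by
  induction k with
  | zero => rw [mul_zero, pow_zero]; rfl
  | succ k ih =>
    rw [mul_add_one, altWord, altWord, List.reverse_cons, List.reverse_cons, List.map_append,
      List.map_append, List.prod_append, List.prod_append, ih, pow_succ, mul_assoc]
    simp only [List.map_cons, List.map_nil, List.prod_singleton]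

theorem leftInvSeq_altWord (i j : B) (k : ℕ) :
    cs.leftInvSeq (altWord i j k) =
      (List.range k).map fun l => (cs.simple i * cs.simple j) ^ l * cs.simple i := by
  induction k generalizing i j with
  | zero => rfl
  | succ k ih =>
    rw [altWord, CoxeterSystem.leftInvSeq, ih, List.range_succ_eq_map, List.map_cons,
      List.map_map, List.map_map, pow_zero, one_mul]
    congr 1
    refine List.map_congr_left fun l _ => ?_
    simp only [Function.comp_apply, MulAut.conj_apply, cs.inv_simple, pow_succ]
    rw [← mul_assoc, ← mul_pow_mul]
    simp only [mul_assoc]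

end AltWord

section Exchange

open scoped Classical in
/-- The action of a generator on `W × ℤ/2` in Tits' proof of the exchange property: the second
component records how often a given reflection occurs in an inversion sequence. -/
noncomputable def titsAction {B : Type*} {M : CoxeterMatrix B} {W : Type*} [Group W]
    (cs : CoxeterSystem M W) (i : B) : Function.End (W × ZMod 2) :=
  fun p => (cs.simple i * p.1 * cs.simple i, p.2 + if p.1 = cs.simple i then 1 else 0)

variable {B : Type*} {M : CoxeterMatrix B} {W : Type*} [Group W] (cs : CoxeterSystem M W)

open scoped Classical in
theorem prod_map_titsAction_apply (ω : List B) (t : W) (e : ZMod 2) :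
    (ω.reverse.map (titsAction cs)).prod (t, e) =
      ((cs.wordProd ω)⁻¹ * t * cs.wordProd ω, e + ((cs.leftInvSeq ω).count t : ℕ)) := by
  induction ω generalizing t e with
  | nil => simp [Function.End.one_def]
  | cons i ω ih =>
    have hconj : MulAut.conj (cs.simple i) (cs.simple i * t * cs.simple i) = t := by
      simp [mul_assoc]
    have hcount : (cs.leftInvSeq (i :: ω)).count t =
        (cs.leftInvSeq ω).count (cs.simple i * t * cs.simple i) +
          if t = cs.simple i then 1 else 0 := by
      rw [CoxeterSystem.leftInvSeq, List.count_cons, ← List.count_map_of_injective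
        (cs.leftInvSeq ω) _ (MulAut.conj (cs.simple i)).injective, hconj]
      simp only [beq_iff_eq, @eq_comm _ t]
    rw [List.reverse_cons, List.map_append, List.prod_append, List.map_singleton,
      List.prod_singleton]
    change (ω.reverse.map (titsAction cs)).prod (titsAction cs i (t, e)) = _
    rw [titsAction, ih, hcount, cs.wordProd_cons]
    refine Prod.ext ?_ ?_
    · simp [mul_assoc]
    · push_cast
      ring

theorem isLiftable_titsAction : M.IsLiftable (titsAction cs) := fun i j => by
  classical
  funext ⟨t, e⟩
  have hper (l : ℕ) : (cs.simple j * cs.simple i) ^ (M i j + l) =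
      (cs.simple j * cs.simple i) ^ l := by
    rw [pow_add, M.symmetric, cs.simple_mul_simple_pow, one_mul]
  have hword : cs.wordProd (altWord j i (2 * M i j)) = 1 := by
    rw [← inv_eq_one, ← cs.wordProd_reverse, CoxeterSystem.wordProd, prod_map_reverse_altWord,
      cs.simple_mul_simple_pow]
  have hcount : ((cs.leftInvSeq (altWord j i (2 * M i j))).count t : ZMod 2) = 0 := by
    rw [leftInvSeq_altWord, two_mul, List.range_add, List.map_append, List.map_map,
      List.count_append]
    simp only [Function.comp_def, hper, Nat.cast_add, CharTwo.add_self_eq_zero]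
  rw [← prod_map_reverse_altWord, prod_map_titsAction_apply, hword, hcount]
  simp [Function.End.one_def]

theorem lift_titsAction_wordProd (ω : List B) :
    cs.lift ⟨titsAction cs, isLiftable_titsAction cs⟩ (cs.wordProd ω) =
      (ω.map (titsAction cs)).prod := by
  rw [CoxeterSystem.wordProd, map_list_prod, List.map_map]
  congr 2
  funext i
  exact cs.lift_apply_simple (isLiftable_titsAction cs) i

open scoped Classical in
theorem count_leftInvSeq_eq {ω ω' : List B} (h : cs.wordProd ω = cs.wordProd ω') (t : W) :
    ((cs.leftInvSeq ω).count t : ZMod 2) = (cs.leftInvSeq ω').count t := by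
  have hrev : cs.wordProd ω.reverse = cs.wordProd ω'.reverse := by
    rw [cs.wordProd_reverse, cs.wordProd_reverse, h]
  have key := prod_map_titsAction_apply cs ω t 0
  rw [← lift_titsAction_wordProd, hrev, lift_titsAction_wordProd, prod_map_titsAction_apply] at key
  simpa only [zero_add] using (congrArg Prod.snd key).symm

theorem simple_mem_leftInvSeq {ω : List B} {i : B} (h : cs.IsLeftDescent (cs.wordProd ω) i) :
    cs.simple i ∈ cs.leftInvSeq ω := by
  classical
  obtain ⟨ω', hred, hω'⟩ := cs.exists_isReduced (cs.simple i * cs.wordProd ω)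
  have hprod : cs.wordProd (i :: ω') = cs.wordProd ω := by
    rw [cs.wordProd_cons, ← hω', cs.simple_mul_simple_cancel_left]
  have hred' : cs.IsReduced (i :: ω') := by
    rw [CoxeterSystem.IsReduced, hprod, List.length_cons, ← hred.eq, ← hω',
      cs.isLeftDescent_iff.mp h]
  have hcount : (cs.leftInvSeq (i :: ω')).count (cs.simple i) = 1 :=
    List.count_eq_one_of_mem hred'.nodup_leftInvSeq List.mem_cons_self
  have hpar := count_leftInvSeq_eq cs hprod (cs.simple i)
  by_contra hnot
  rw [hcount, List.count_eq_zero_of_not_mem hnot] at hpar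
  simp at hpar

theorem exists_mul_wordProd_eq_wordProd_eraseIdx {ω : List B} {r : W}
    (h : r ∈ cs.leftInvSeq ω) : ∃ k < ω.length, r * cs.wordProd ω = cs.wordProd (ω.eraseIdx k) := by
  obtain ⟨k, hk, rfl⟩ := List.getElem_of_mem h
  refine ⟨k, by simpa only [cs.length_leftInvSeq] using hk, ?_⟩
  rw [← cs.getD_leftInvSeq_mul_wordProd, List.getD_eq_getElem _ _ hk]

theorem exists_simple_mul_wordProd_eq {ω : List B} {i : B}
    (h : cs.IsLeftDescent (cs.wordProd ω) i) :
    ∃ k < ω.length, cs.simple i * cs.wordProd ω = cs.wordProd (ω.eraseIdx k) :=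
  exists_mul_wordProd_eq_wordProd_eraseIdx cs (simple_mem_leftInvSeq cs h)

theorem length_wordProd_eraseIdx_lt {ω : List B} {k : ℕ} (hk : k < ω.length) :
    cs.length (cs.wordProd (ω.eraseIdx k)) < ω.length :=
  (cs.length_wordProd_le _).trans_lt (by rw [List.length_eraseIdx_of_lt hk]; omega)

end Exchange

/-- Length additivity: a reduced word for `u` followed by one for `v` is a reduced word for
`u * v`. -/
def LengthAdditive {B : Type*} {M : CoxeterMatrix B} {W : Type*} [Group W]
    (cs : CoxeterSystem M W) (u v : W) : Prop :=
  cs.length (u * v) = cs.length u + cs.length v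

/-- The left-prefix weak order: some reduced word for `v` starts with a reduced word for `u`. -/
def WeakLE {B : Type*} {M : CoxeterMatrix B} {W : Type*} [Group W]
    (cs : CoxeterSystem M W) (u v : W) : Prop :=
  LengthAdditive cs u (u⁻¹ * v)

section WeakOrder

variable {B : Type*} {M : CoxeterMatrix B} {W : Type*} [Group W] {cs : CoxeterSystem M W}
variable {u v x y z : W} {i : B}

theorem weakLE_mul_iff : WeakLE cs u (u * z) ↔ LengthAdditive cs u z := by
  rw [WeakLE, inv_mul_cancel_left]

theorem weakLE_iff : WeakLE cs u v ↔ cs.length v = cs.length u + cs.length (u⁻¹ * v) := by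
  rw [WeakLE, LengthAdditive, mul_inv_cancel_left]

theorem length_le_add_length_inv_mul (cs : CoxeterSystem M W) (u v : W) :
    cs.length v ≤ cs.length u + cs.length (u⁻¹ * v) := by
  simpa only [mul_inv_cancel_left] using cs.length_mul_le u (u⁻¹ * v)

theorem length_inv_mul_le (cs : CoxeterSystem M W) (u v w : W) :
    cs.length (u⁻¹ * w) ≤ cs.length (u⁻¹ * v) + cs.length (v⁻¹ * w) := by
  simpa only [mul_assoc, mul_inv_cancel_left] using cs.length_mul_le (u⁻¹ * v) (v⁻¹ * w)

theorem lengthAdditive_one_left : LengthAdditive cs 1 u := by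
  simp [LengthAdditive]

theorem lengthAdditive_one_right : LengthAdditive cs u 1 := by
  simp [LengthAdditive]

theorem LengthAdditive.inv (h : LengthAdditive cs u v) : LengthAdditive cs v⁻¹ u⁻¹ := by
  rw [LengthAdditive, ← mul_inv_rev, cs.length_inv, cs.length_inv, cs.length_inv, h, add_comm]

theorem WeakLE.refl (u : W) : WeakLE cs u u := by
  simp [weakLE_iff]

theorem WeakLE.trans (huv : WeakLE cs u v) (hvx : WeakLE cs v x) : WeakLE cs u x := by
  have h₁ := length_le_add_length_inv_mul cs u x
  have h₂ := length_inv_mul_le cs u v x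
  rw [weakLE_iff] at *
  omega

theorem WeakLE.length_le (h : WeakLE cs u v) : cs.length u ≤ cs.length v := by
  rw [weakLE_iff] at h
  omega

theorem WeakLE.eq_of_length_le (h : WeakLE cs u v) (hle : cs.length v ≤ cs.length u) : u = v := by
  rw [weakLE_iff] at h
  exact inv_mul_eq_one.mp (cs.length_eq_zero_iff.mp (by omega))

theorem WeakLE.antisymm (huv : WeakLE cs u v) (hvu : WeakLE cs v u) : u = v :=
  huv.eq_of_length_le hvu.length_le

theorem one_weakLE (u : W) : WeakLE cs 1 u :=
  lengthAdditive_one_left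

theorem LengthAdditive.assoc (hxy : LengthAdditive cs x y) (hxyz : LengthAdditive cs (x * y) z) :
    LengthAdditive cs x (y * z) ∧ LengthAdditive cs y z := by
  have h₁ := cs.length_mul_le x (y * z)
  have h₂ := cs.length_mul_le y z
  unfold LengthAdditive at *
  rw [mul_assoc] at hxyz
  omega

theorem LengthAdditive.assoc_symm (hyz : LengthAdditive cs y z)
    (hxyz : LengthAdditive cs x (y * z)) :
    LengthAdditive cs x y ∧ LengthAdditive cs (x * y) z := by
  have h₁ := cs.length_mul_le (x * y) z
  have h₂ := cs.length_mul_le x y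
  unfold LengthAdditive at *
  rw [mul_assoc] at h₁ ⊢
  omega

theorem LengthAdditive.of_weakLE (h : LengthAdditive cs u v) (hz : WeakLE cs z v) :
    LengthAdditive cs u z :=
  (LengthAdditive.assoc_symm hz (by rwa [mul_inv_cancel_left])).1

theorem WeakLE.mul_left_iff (hz : LengthAdditive cs u z) (hv : LengthAdditive cs u v) :
    WeakLE cs (u * z) (u * v) ↔ WeakLE cs z v := by
  rw [weakLE_iff, weakLE_iff, hz, hv, mul_inv_rev, mul_assoc, inv_mul_cancel_left, add_assoc,
    add_right_inj]

theorem WeakLE.inv_mul_weakLE_inv_mul (hux : WeakLE cs u x) (hxv : WeakLE cs x v) :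
    WeakLE cs (u⁻¹ * x) (u⁻¹ * v) :=
  (WeakLE.mul_left_iff hux (hux.trans hxv)).mp (by rwa [mul_inv_cancel_left, mul_inv_cancel_left])

theorem lengthAdditive_simple_iff : LengthAdditive cs (cs.simple i) u ↔ ¬cs.IsLeftDescent u i := by
  rw [LengthAdditive, cs.length_simple, add_comm, cs.not_isLeftDescent_iff]

theorem lengthAdditive_simple_right_iff :
    LengthAdditive cs u (cs.simple i) ↔ ¬cs.IsRightDescent u i := by
  rw [LengthAdditive, cs.length_simple, cs.not_isRightDescent_iff]

theorem simple_weakLE_iff : WeakLE cs (cs.simple i) u ↔ cs.IsLeftDescent u i := by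
  rw [WeakLE, lengthAdditive_simple_iff, cs.inv_simple,
    ← cs.isLeftDescent_iff_not_isLeftDescent_mul]

theorem WeakLE.exists_mul_simple_weakLE (h : WeakLE cs u v) (hne : u ≠ v) :
    ∃ i, LengthAdditive cs u (cs.simple i) ∧ WeakLE cs (u * cs.simple i) v := by
  obtain ⟨i, hi⟩ := cs.exists_leftDescent_of_ne_one (mt inv_mul_eq_one.mp hne)
  have hle : WeakLE cs (cs.simple i) (u⁻¹ * v) := simple_weakLE_iff.mpr hi
  have hui : LengthAdditive cs u (cs.simple i) := LengthAdditive.of_weakLE h hle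
  exact ⟨i, hui, by simpa only [mul_inv_cancel_left] using (WeakLE.mul_left_iff hui h).mpr hle⟩

theorem WeakLE.simple_mul (h : WeakLE cs u v) (hu : ¬cs.IsLeftDescent u i)
    (hv : cs.IsLeftDescent v i) : WeakLE cs (cs.simple i * u) v := by
  obtain ⟨ω, hω, rfl⟩ := cs.exists_isReduced u
  obtain ⟨ζ, hζ, hvζ⟩ := cs.exists_isReduced ((cs.wordProd ω)⁻¹ * v)
  have hprod : cs.wordProd (ω ++ ζ) = v := by rw [cs.wordProd_append, ← hvζ, mul_inv_cancel_left]
  obtain ⟨k, hk, hik⟩ := exists_simple_mul_wordProd_eq cs (hprod.symm ▸ hv)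
  rw [cs.wordProd_append] at hik
  rcases lt_or_ge k ω.length with hkω | hkω
  · rw [List.eraseIdx_append_of_lt_length hkω, cs.wordProd_append, ← mul_assoc,
      mul_right_cancel_iff] at hik
    have hlt := length_wordProd_eraseIdx_lt cs hkω
    rw [← hik, ← hω.eq] at hlt
    exact absurd hlt hu
  · have hkζ : k - ω.length < ζ.length := by rw [List.length_append] at hk; omega
    have hlt := length_wordProd_eraseIdx_lt cs hkζ
    have hword : (cs.simple i * cs.wordProd ω)⁻¹ * v =
        cs.wordProd (ζ.eraseIdx (k - ω.length)) := by
      rw [List.eraseIdx_append_of_length_le hkω, cs.wordProd_append, ← cs.wordProd_append ω ζ,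
        hprod] at hik
      rw [mul_inv_rev, cs.inv_simple, mul_assoc, hik, inv_mul_cancel_left]
    have hle := length_le_add_length_inv_mul cs (cs.simple i * cs.wordProd ω) v
    rw [weakLE_iff, hvζ, hζ.eq] at h
    rw [cs.not_isLeftDescent_iff] at hu
    rw [weakLE_iff, hword] at *
    omega

theorem weakLE_of_forall_length_le {w₀ : W} (hw₀ : ∀ u, cs.length u ≤ cs.length w₀) (u : W) :
    WeakLE cs u w₀ := by
  induction hn : cs.length u generalizing u with
  | zero =>
    rw [cs.length_eq_zero_iff.mp hn]
    exact one_weakLE w₀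
  | succ n ih =>
    obtain ⟨i, hi⟩ := cs.exists_leftDescent_of_ne_one (w := u) (by rintro rfl; simp at hn)
    have hw₀i : cs.IsLeftDescent w₀ i :=
      (hw₀ _).lt_of_ne (cs.length_simple_mul_ne w₀ i)
    simpa only [cs.simple_mul_simple_cancel_left] using
      (ih (cs.simple i * u) (by rw [cs.isLeftDescent_iff] at hi; omega)).simple_mul
        (cs.isLeftDescent_iff_not_isLeftDescent_mul.mp hi) hw₀i

end WeakOrder

section RankTwo

variable {B : Type*} {M : CoxeterMatrix B} {W : Type*} [Group W] (cs : CoxeterSystem M W)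
variable {i j : B}

theorem isReduced_cons_iff {ω : List B} :
    cs.IsReduced (i :: ω) ↔ cs.IsReduced ω ∧ ¬cs.IsLeftDescent (cs.wordProd ω) i := by
  refine ⟨fun h => ?_, fun ⟨hω, hi⟩ => ?_⟩
  · have hω : cs.IsReduced ω := h.drop 1
    refine ⟨hω, ?_⟩
    rw [cs.not_isLeftDescent_iff, ← cs.wordProd_cons, h.eq, hω.eq, List.length_cons]
  · rw [CoxeterSystem.IsReduced, cs.wordProd_cons, cs.not_isLeftDescent_iff.mp hi, hω.eq,
      List.length_cons]

theorem not_isLeftDescent_wordProd_altWord {k : ℕ} (hk : M i j = 0 ∨ k < M i j) :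
    ¬cs.IsLeftDescent (cs.wordProd (altWord j i k)) i := by
  intro h
  have hmem := simple_mem_leftInvSeq cs h
  rw [leftInvSeq_altWord] at hmem
  obtain ⟨l, hl, hil⟩ := List.mem_map.mp hmem
  have hpow : (cs.simple j * cs.simple i) ^ (l + 1) = 1 := by
    rw [pow_succ, ← mul_assoc, hil, cs.simple_mul_simple_self]
  have hdvd : M i j ∣ l + 1 := by
    rw [M.symmetric, ← orderOf_simple_mul_simple cs]
    exact orderOf_dvd_of_pow_eq_one hpow
  rcases hk with hM | hk
  · rw [hM, zero_dvd_iff] at hdvd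
    omega
  · have := Nat.le_of_dvd l.succ_pos hdvd
    have := List.mem_range.mp hl
    omega

theorem isReduced_altWord {k : ℕ} (hk : M i j = 0 ∨ k ≤ M i j) :
    cs.IsReduced (altWord i j k) := by
  induction k generalizing i j with
  | zero => simp [altWord, CoxeterSystem.IsReduced]
  | succ k ih =>
    exact (isReduced_cons_iff cs).mpr ⟨ih (by rw [M.symmetric]; omega),
      not_isLeftDescent_wordProd_altWord cs (by omega)⟩

variable {cs} {x : W} {ω ω' : List B}

theorem isReduced_append (hω : cs.IsReduced ω) (hω' : cs.IsReduced ω')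
    (h : LengthAdditive cs (cs.wordProd ω) (cs.wordProd ω')) : cs.IsReduced (ω ++ ω') := by
  rw [CoxeterSystem.IsReduced, cs.wordProd_append, h, hω.eq, hω'.eq, List.length_append]

theorem isLeftDescent_of_isReduced_cons (h : cs.IsReduced (i :: ω)) :
    cs.IsLeftDescent (cs.wordProd (i :: ω)) i := by
  rw [← simple_weakLE_iff, cs.wordProd_cons, weakLE_mul_iff, lengthAdditive_simple_iff]
  exact ((isReduced_cons_iff cs).mp h).2

theorem wordProd_altWord_weakLE (hi : cs.IsLeftDescent x i) (hj : cs.IsLeftDescent x j) {k : ℕ}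
    (hk : M i j = 0 ∨ k ≤ M i j) : WeakLE cs (cs.wordProd (altWord i j k)) x := by
  induction k generalizing i j with
  | zero => exact one_weakLE x
  | succ k ih =>
    rw [altWord, cs.wordProd_cons]
    exact (ih hj hi (by rw [M.symmetric]; omega)).simple_mul
      (not_isLeftDescent_wordProd_altWord cs (by omega)) hi

theorem ne_zero_of_isLeftDescent (hi : cs.IsLeftDescent x i) (hj : cs.IsLeftDescent x j) :
    M i j ≠ 0 := by
  intro hM
  have hle := (wordProd_altWord_weakLE hi hj (k := cs.length x + 1) (Or.inl hM)).length_le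
  rw [(isReduced_altWord cs (Or.inl hM)).eq, length_altWord] at hle
  omega

end RankTwo

section Parabolic

variable {B : Type*} {M : CoxeterMatrix B} {W : Type*} [Group W] (cs : CoxeterSystem M W)
variable (I : Set B)

/-- The standard parabolic subgroup `W_I`. -/
def parabolic : Subgroup W := Subgroup.closure (cs.simple '' I)

variable {cs I} {p u x : W} {i : B}

theorem simple_mem_parabolic (hi : i ∈ I) : cs.simple i ∈ parabolic cs I :=
  Subgroup.subset_closure (Set.mem_image_of_mem _ hi)

theorem wordProd_mem_parabolic {ω : List B} (hω : ∀ i ∈ ω, i ∈ I) :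
    cs.wordProd ω ∈ parabolic cs I :=
  list_prod_mem (List.forall_mem_map.mpr fun i hi => simple_mem_parabolic (hω i hi))

theorem mem_parabolic_of_mem_leftInvSeq {ω : List B} (hω : ∀ i ∈ ω, i ∈ I)
    (hx : x ∈ cs.leftInvSeq ω) : x ∈ parabolic cs I := by
  obtain ⟨k, -, hxk⟩ := exists_mul_wordProd_eq_wordProd_eraseIdx cs hx
  rw [eq_mul_inv_of_mul_eq hxk]
  exact mul_mem (wordProd_mem_parabolic fun i hi => hω i (List.mem_of_mem_eraseIdx hi))
    (inv_mem (wordProd_mem_parabolic hω))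

theorem exists_isReduced_of_mem_parabolic (hp : p ∈ parabolic cs I) :
    ∃ ω : List B, cs.IsReduced ω ∧ (∀ i ∈ ω, i ∈ I) ∧ p = cs.wordProd ω := by
  have hcons : ∀ (i : B) (q : W), i ∈ I →
      (∃ ω : List B, cs.IsReduced ω ∧ (∀ i ∈ ω, i ∈ I) ∧ q = cs.wordProd ω) →
      ∃ ω : List B, cs.IsReduced ω ∧ (∀ i ∈ ω, i ∈ I) ∧ cs.simple i * q = cs.wordProd ω := by
    rintro i _ hi ⟨ω, hred, hω, rfl⟩
    by_cases hdesc : cs.IsLeftDescent (cs.wordProd ω) i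
    · obtain ⟨k, hk, hik⟩ := exists_simple_mul_wordProd_eq cs hdesc
      refine ⟨ω.eraseIdx k, ?_, fun j hj => hω j (List.mem_of_mem_eraseIdx hj), hik⟩
      have hlen := cs.isLeftDescent_iff.mp hdesc
      rw [hred.eq, hik] at hlen
      rw [CoxeterSystem.IsReduced, List.length_eraseIdx_of_lt hk]
      omega
    · exact ⟨i :: ω, (isReduced_cons_iff cs).mpr ⟨hred, hdesc⟩, by simpa using ⟨hi, hω⟩,
        (cs.wordProd_cons i ω).symm⟩
  induction hp using Subgroup.closure_induction_left with
  | one => exact ⟨[], by simp [CoxeterSystem.IsReduced], by simp, rfl⟩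
  | mul_left x hx y _ ih =>
    obtain ⟨i, hi, rfl⟩ := hx
    exact hcons i y hi ih
  | inv_mul_cancel x hx y _ ih =>
    obtain ⟨i, hi, rfl⟩ := hx
    rw [cs.inv_simple]
    exact hcons i y hi ih

theorem exists_isLeftDescent_of_mem_parabolic (hp : p ∈ parabolic cs I) (hne : p ≠ 1) :
    ∃ i ∈ I, cs.IsLeftDescent p i := by
  obtain ⟨ω, hred, hω, rfl⟩ := exists_isReduced_of_mem_parabolic hp
  cases ω with
  | nil => exact absurd rfl hne
  | cons i ω =>
    refine ⟨i, hω i List.mem_cons_self, simple_weakLE_iff.mp ?_⟩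
    rw [cs.wordProd_cons, weakLE_mul_iff, lengthAdditive_simple_iff]
    exact ((isReduced_cons_iff cs).mp hred).2

theorem simple_mem_parabolic_of_isLeftDescent (hp : p ∈ parabolic cs I)
    (hi : cs.IsLeftDescent p i) : cs.simple i ∈ parabolic cs I := by
  obtain ⟨ω, -, hω, rfl⟩ := exists_isReduced_of_mem_parabolic hp
  exact mem_parabolic_of_mem_leftInvSeq hω (simple_mem_leftInvSeq cs hi)

theorem WeakLE.mem_parabolic (hux : WeakLE cs u x) (hx : x ∈ parabolic cs I) :
    u ∈ parabolic cs I := by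
  induction hn : cs.length u generalizing u x with
  | zero =>
    rw [cs.length_eq_zero_iff.mp hn]
    exact one_mem _
  | succ n ih =>
    obtain ⟨i, hi⟩ := cs.exists_leftDescent_of_ne_one (w := u) (by rintro rfl; simp at hn)
    have hiu : WeakLE cs (cs.simple i) u := simple_weakLE_iff.mpr hi
    have hiP := simple_mem_parabolic_of_isLeftDescent hx (simple_weakLE_iff.mp (hiu.trans hux))
    have hle := hiu.inv_mul_weakLE_inv_mul hux
    have hlen : cs.length ((cs.simple i)⁻¹ * u) = n := by
      rw [cs.inv_simple]
      rw [cs.isLeftDescent_iff] at hi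
      omega
    exact (mul_mem_cancel_left (inv_mem hiP)).mp (ih hle (mul_mem (inv_mem hiP) hx) hlen)

theorem lengthAdditive_of_forall_length_le
    (hx : ∀ q ∈ parabolic cs I, cs.length x ≤ cs.length (q * x)) (hp : p ∈ parabolic cs I) :
    LengthAdditive cs p x := by
  obtain ⟨ω, hred, hω, rfl⟩ := exists_isReduced_of_mem_parabolic hp
  clear hp
  induction ω with
  | nil => exact lengthAdditive_one_left
  | cons i ω ih =>
    obtain ⟨hi, hω⟩ := List.forall_mem_cons.mp hω
    obtain ⟨hred, hdesc⟩ := (isReduced_cons_iff cs).mp hred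
    have hωx := ih hred hω
    have hP := wordProd_mem_parabolic (cs := cs) hω
    rw [cs.wordProd_cons]
    refine (hωx.assoc_symm (lengthAdditive_simple_iff.mpr fun hdescx => ?_)).2
    have hle := (weakLE_mul_iff.mpr hωx).simple_mul hdesc hdescx
    have hmin := hx _ (mul_mem (inv_mem (mul_mem (simple_mem_parabolic hi) hP)) hP)
    rw [weakLE_iff, hωx, cs.not_isLeftDescent_iff.mp hdesc, ← mul_assoc] at hle
    omega

theorem exists_mem_parabolic_forall_length_le (cs : CoxeterSystem M W) (I : Set B) (x : W) :
    ∃ p ∈ parabolic cs I, ∀ q ∈ parabolic cs I, cs.length (p * x) ≤ cs.length (q * (p * x)) := by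
  obtain ⟨p, hp, hmin⟩ := exists_minimalFor_of_wellFoundedLT (· ∈ parabolic cs I)
    (fun p => cs.length (p * x)) ⟨1, one_mem _⟩
  refine ⟨p, hp, fun q hq => ?_⟩
  rw [← mul_assoc]
  exact le_of_not_gt fun hlt => hlt.not_ge (hmin (mul_mem hq hp) hlt.le)

theorem lengthAdditive_of_mem_parabolic (hx : ∀ i ∈ I, ¬cs.IsLeftDescent x i)
    (hp : p ∈ parabolic cs I) : LengthAdditive cs p x := by
  obtain ⟨q, hq, hmin⟩ := exists_mem_parabolic_forall_length_le cs I x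
  obtain rfl | hne := eq_or_ne q 1
  · exact lengthAdditive_of_forall_length_le (by simpa only [one_mul] using hmin) hp
  · obtain ⟨i, hi, hdesc⟩ := exists_isLeftDescent_of_mem_parabolic (inv_mem hq) (inv_ne_one.mpr hne)
    have hqx : WeakLE cs q⁻¹ x := by
      simpa only [inv_mul_cancel_left] using
        weakLE_mul_iff.mpr (lengthAdditive_of_forall_length_le hmin (inv_mem hq))
    exact absurd (simple_weakLE_iff.mp ((simple_weakLE_iff.mpr hdesc).trans hqx)) (hx i hi)

theorem lengthAdditive_of_mem_parabolic_right (hx : ∀ i ∈ I, ¬cs.IsRightDescent x i)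
    (hp : p ∈ parabolic cs I) : LengthAdditive cs x p := by
  have h := (lengthAdditive_of_mem_parabolic (x := x⁻¹)
    (fun i hi => by rw [cs.isLeftDescent_inv_iff]; exact hx i hi) (inv_mem hp)).inv
  rwa [inv_inv, inv_inv] at h

end Parabolic

section HeadMul

variable {B : Type*} {M : CoxeterMatrix B} {W : Type*} [Group W] {cs : CoxeterSystem M W}
variable {i j : B} {u x y z : W}

-- Newman's argument: local joins of covers yield a greatest element, by induction from the top.
theorem exists_greatest_weakLE {P : W → Prop} (one : P 1)
    (of_weakLE : ∀ {u v}, WeakLE cs u v → P v → P u)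
    {n : ℕ} (length_le : ∀ v, P v → cs.length v ≤ n)
    (join : ∀ {z i j}, LengthAdditive cs z (cs.simple i) → LengthAdditive cs z (cs.simple j) →
      P (z * cs.simple i) → P (z * cs.simple j) →
      ∃ d, P d ∧ WeakLE cs (z * cs.simple i) d ∧ WeakLE cs (z * cs.simple j) d) :
    ∃ m, P m ∧ ∀ v, P v → WeakLE cs v m := by
  suffices key : ∀ (k : ℕ) (z : W), n - cs.length z = k → P z →
      ∃ m, P m ∧ ∀ v, WeakLE cs z v → P v → WeakLE cs v m by
    obtain ⟨m, hm, hmax⟩ := key _ 1 rfl one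
    exact ⟨m, hm, fun v => hmax v (one_weakLE v)⟩
  intro k
  induction k using Nat.strong_induction_on with
  | _ k ih =>
  intro z hk hz
  have above : ∀ j, LengthAdditive cs z (cs.simple j) → P (z * cs.simple j) →
      ∃ m, P m ∧ ∀ v, WeakLE cs (z * cs.simple j) v → P v → WeakLE cs v m := by
    intro j hj hPj
    have hlen := length_le _ hPj
    refine ih _ ?_ _ rfl hPj
    rw [hj, cs.length_simple] at hlen ⊢
    omega
  by_cases hex : ∃ i, LengthAdditive cs z (cs.simple i) ∧ P (z * cs.simple i)
  · obtain ⟨i, hi, hPi⟩ := hex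
    obtain ⟨m, hm, hmax⟩ := above i hi hPi
    refine ⟨m, hm, fun v hzv hv => ?_⟩
    obtain rfl | hne := eq_or_ne z v
    · exact (weakLE_mul_iff.mpr hi).trans (hmax _ (.refl _) hPi)
    obtain ⟨j, hj, hjv⟩ := hzv.exists_mul_simple_weakLE hne
    have hPj := of_weakLE hjv hv
    obtain ⟨d, hd, hid, hjd⟩ := join hi hj hPi hPj
    obtain ⟨m', hm', hmax'⟩ := above j hj hPj
    exact (hmax' v hjv hv).trans (hmax m' (hid.trans (hmax' d hjd hd)) hm')
  · refine ⟨z, hz, fun v hzv hv => ?_⟩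
    obtain rfl | hne := eq_or_ne z v
    · exact .refl z
    obtain ⟨j, hj, hjv⟩ := hzv.exists_mul_simple_weakLE hne
    exact absurd ⟨j, hj, of_weakLE hjv hv⟩ hex

theorem isLeftDescent_of_mul_simple_weakLE (hz : LengthAdditive cs z (cs.simple i))
    (hy : WeakLE cs (z * cs.simple i) y) : cs.IsLeftDescent (z⁻¹ * y) i := by
  have h := (weakLE_mul_iff.mpr hz).inv_mul_weakLE_inv_mul hy
  rwa [inv_mul_cancel_left, simple_weakLE_iff] at h

theorem isLeftDescent_wordProd_altWord (hM : M i j ≠ 0) :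
    cs.IsLeftDescent (cs.wordProd (altWord i j (M i j))) i := by
  have hred := isReduced_altWord cs (i := i) (j := j) (Or.inr le_rfl)
  obtain ⟨k, hk⟩ := Nat.exists_eq_succ_of_ne_zero hM
  rw [hk] at hred ⊢
  exact isLeftDescent_of_isReduced_cons hred

theorem lengthAdditive_wordProd_altWord (hi : LengthAdditive cs x (cs.simple i))
    (hj : LengthAdditive cs x (cs.simple j)) (k : ℕ) :
    LengthAdditive cs x (cs.wordProd (altWord i j k)) := by
  refine lengthAdditive_of_mem_parabolic_right (I := {i, j}) ?_
    (wordProd_mem_parabolic (mem_altWord i j k))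
  rintro l (rfl | rfl)
  exacts [lengthAdditive_simple_right_iff.mp hi, lengthAdditive_simple_right_iff.mp hj]

theorem exists_join_of_lengthAdditive
    (hi : LengthAdditive cs z (cs.simple i)) (hj : LengthAdditive cs z (cs.simple j))
    (hiy : WeakLE cs (z * cs.simple i) y) (hjy : WeakLE cs (z * cs.simple j) y)
    (hui : LengthAdditive cs u (z * cs.simple i)) (huj : LengthAdditive cs u (z * cs.simple j)) :
    ∃ d, (WeakLE cs d y ∧ LengthAdditive cs u d) ∧
      WeakLE cs (z * cs.simple i) d ∧ WeakLE cs (z * cs.simple j) d := by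
  have hzy : WeakLE cs z y := (weakLE_mul_iff.mpr hi).trans hiy
  have hdi := isLeftDescent_of_mul_simple_weakLE hi hiy
  have hdj := isLeftDescent_of_mul_simple_weakLE hj hjy
  have hM : M i j ≠ 0 := ne_zero_of_isLeftDescent hdi hdj
  set δ := cs.wordProd (altWord i j (M i j)) with hδ
  have hδy : WeakLE cs δ (z⁻¹ * y) := wordProd_altWord_weakLE hdi hdj (Or.inr le_rfl)
  have hzδ : LengthAdditive cs z δ := hzy.of_weakLE hδy
  have hiδ : WeakLE cs (cs.simple i) δ := simple_weakLE_iff.mpr (isLeftDescent_wordProd_altWord hM)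
  have hjδ : WeakLE cs (cs.simple j) δ := by
    rw [hδ, wordProd_altWord_comm, M.symmetric, simple_weakLE_iff]
    exact isLeftDescent_wordProd_altWord (M.symmetric i j ▸ hM)
  have huzδ : LengthAdditive cs (u * z) δ :=
    lengthAdditive_wordProd_altWord (hi.assoc_symm hui).2 (hj.assoc_symm huj).2 _
  refine ⟨z * δ, ⟨?_, ?_⟩, (WeakLE.mul_left_iff hi hzδ).mpr hiδ,
    (WeakLE.mul_left_iff hj hzδ).mpr hjδ⟩
  · simpa only [mul_inv_cancel_left] using (WeakLE.mul_left_iff hzδ hzy).mpr hδy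
  · exact ((hi.assoc_symm hui).1.assoc huzδ).1

theorem exists_greatest_lengthAdditive (cs : CoxeterSystem M W) (u y : W) :
    ∃ m, (WeakLE cs m y ∧ LengthAdditive cs u m) ∧
      ∀ x, WeakLE cs x y ∧ LengthAdditive cs u x → WeakLE cs x m :=
  exists_greatest_weakLE (P := fun x => WeakLE cs x y ∧ LengthAdditive cs u x)
    ⟨one_weakLE y, lengthAdditive_one_right⟩ (fun h hv => ⟨h.trans hv.1, hv.2.of_weakLE h⟩)
    (fun _ hv => hv.1.length_le)
    (fun hi hj hPi hPj => exists_join_of_lengthAdditive hi hj hPi.1 hPj.1 hPi.2 hPj.2)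

variable (cs) in
/-- The greatest prefix `x` of `y` such that `u * x` is length additive. -/
noncomputable def maxPrefix (u y : W) : W := (exists_greatest_lengthAdditive cs u y).choose

theorem maxPrefix_weakLE (u y : W) : WeakLE cs (maxPrefix cs u y) y :=
  (exists_greatest_lengthAdditive cs u y).choose_spec.1.1

theorem lengthAdditive_maxPrefix (u y : W) : LengthAdditive cs u (maxPrefix cs u y) :=
  (exists_greatest_lengthAdditive cs u y).choose_spec.1.2

theorem weakLE_maxPrefix (hxy : WeakLE cs x y) (hux : LengthAdditive cs u x) :
    WeakLE cs x (maxPrefix cs u y) :=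
  (exists_greatest_lengthAdditive cs u y).choose_spec.2 x ⟨hxy, hux⟩

variable (cs) in
/-- The head, that is, the greatest prefix lying in `W`, of the product of `u` and `y` in the
Artin–Tits monoid. -/
noncomputable def headMul (u y : W) : W := u * maxPrefix cs u y

theorem weakLE_headMul (u y : W) : WeakLE cs u (headMul cs u y) :=
  weakLE_mul_iff.mpr (lengthAdditive_maxPrefix u y)

theorem mul_weakLE_headMul_iff (h : LengthAdditive cs u z) :
    WeakLE cs (u * z) (headMul cs u y) ↔ WeakLE cs z y := by
  rw [headMul, WeakLE.mul_left_iff h (lengthAdditive_maxPrefix u y)]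
  exact ⟨fun hz => hz.trans (maxPrefix_weakLE u y), fun hz => weakLE_maxPrefix hz h⟩

theorem eq_headMul (hux : WeakLE cs u x)
    (h : ∀ z, LengthAdditive cs u z → (WeakLE cs (u * z) x ↔ WeakLE cs z y)) :
    x = headMul cs u y := by
  refine WeakLE.antisymm ?_ ((h _ (lengthAdditive_maxPrefix u y)).mpr (maxPrefix_weakLE u y))
  have hxy : WeakLE cs (u⁻¹ * x) y := (h _ hux).mp (by rw [mul_inv_cancel_left]; exact .refl x)
  simpa only [mul_inv_cancel_left] using (mul_weakLE_headMul_iff hux).mpr hxy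

theorem headMul_of_lengthAdditive (h : LengthAdditive cs u y) : headMul cs u y = u * y :=
  (eq_headMul (weakLE_mul_iff.mpr h) fun _ hz => WeakLE.mul_left_iff hz h).symm

theorem headMul_mul (h : LengthAdditive cs x u) (y : W) :
    headMul cs (x * u) y = headMul cs x (headMul cs u y) := by
  refine (eq_headMul ((mul_weakLE_headMul_iff h).mpr (weakLE_headMul u y)) fun z hz => ?_).symm
  obtain ⟨hxuz, huz⟩ := h.assoc hz
  rw [mul_assoc, mul_weakLE_headMul_iff hxuz, mul_weakLE_headMul_iff huz]

end HeadMul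

section Ribbon

variable {B : Type*} {M : CoxeterMatrix B} {W : Type*} [Group W]

/-- A minimal-length representative `C` of a coset `W_I C` of the parabolic subgroup `W_I` that
conjugates the generators of `W_I` to generators of `W`. -/
structure IsRibbon (cs : CoxeterSystem M W) (I : Set B) (C : W) : Prop where
  not_isLeftDescent : ∀ i ∈ I, ¬cs.IsLeftDescent C i
  exists_simple_mul_eq : ∀ i ∈ I, ∃ j, cs.simple i * C = C * cs.simple j

/-- The generators of `W` to which `C` conjugates the elements of `I`. -/
def conjSet (cs : CoxeterSystem M W) (I : Set B) (C : W) : Set B :=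
  {j | ∃ i ∈ I, cs.simple i * C = C * cs.simple j}

variable {cs : CoxeterSystem M W} {I : Set B} {C p q u A : W}

theorem conj_mem_parabolic (hp : p ∈ parabolic cs (conjSet cs I C)) :
    C * p * C⁻¹ ∈ parabolic cs I := by
  suffices parabolic cs (conjSet cs I C) ≤ (parabolic cs I).comap (MulAut.conj C) from this hp
  refine (Subgroup.closure_le _).mpr ?_
  rintro _ ⟨j, ⟨i, hi, hij⟩, rfl⟩
  change C * cs.simple j * C⁻¹ ∈ parabolic cs I
  rw [← hij, mul_inv_cancel_right]
  exact simple_mem_parabolic hi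

namespace IsRibbon

theorem inv_conj_mem_parabolic (hC : IsRibbon cs I C) (hp : p ∈ parabolic cs I) :
    C⁻¹ * (p * C) ∈ parabolic cs (conjSet cs I C) := by
  suffices parabolic cs I ≤ (parabolic cs (conjSet cs I C)).comap (MulAut.conj C⁻¹) by
    simpa [mul_assoc] using this hp
  refine (Subgroup.closure_le _).mpr ?_
  rintro _ ⟨i, hi, rfl⟩
  obtain ⟨j, hij⟩ := hC.exists_simple_mul_eq i hi
  change C⁻¹ * cs.simple i * C⁻¹⁻¹ ∈ parabolic cs (conjSet cs I C)
  rw [inv_inv, mul_assoc, hij, inv_mul_cancel_left]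
  exact simple_mem_parabolic ⟨i, hi, hij⟩

theorem lengthAdditive (hC : IsRibbon cs I C) (hp : p ∈ parabolic cs I) : LengthAdditive cs p C :=
  lengthAdditive_of_mem_parabolic hC.not_isLeftDescent hp

theorem not_isRightDescent (hC : IsRibbon cs I C) {j : B} (hj : j ∈ conjSet cs I C) :
    ¬cs.IsRightDescent C j := by
  obtain ⟨i, hi, hij⟩ := hj
  rw [CoxeterSystem.IsRightDescent, ← hij]
  exact hC.not_isLeftDescent i hi

theorem length_inv_conj (hC : IsRibbon cs I C) (hp : p ∈ parabolic cs I) :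
    cs.length (C⁻¹ * (p * C)) = cs.length p := by
  have h : LengthAdditive cs C (C⁻¹ * (p * C)) :=
    lengthAdditive_of_mem_parabolic_right (fun _ => hC.not_isRightDescent)
      (hC.inv_conj_mem_parabolic hp)
  rw [LengthAdditive, mul_inv_cancel_left, hC.lengthAdditive hp] at h
  omega

theorem mul_weakLE_mul_iff (hC : IsRibbon cs I C) (hp : p ∈ parabolic cs I)
    (hq : q ∈ parabolic cs I) : WeakLE cs (p * C) (q * C) ↔ WeakLE cs p q := by
  have hpq : (p * C)⁻¹ * (q * C) = C⁻¹ * (p⁻¹ * q * C) := by group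
  rw [weakLE_iff, weakLE_iff, hC.lengthAdditive hp, hC.lengthAdditive hq, hpq,
    hC.length_inv_conj (mul_mem (inv_mem hp) hq)]
  omega

theorem lengthAdditive_mul_iff (hC : IsRibbon cs I C) (hu : u ∈ parabolic cs I)
    (hp : p ∈ parabolic cs I) : LengthAdditive cs u (p * C) ↔ LengthAdditive cs u p := by
  rw [LengthAdditive, LengthAdditive, ← mul_assoc, hC.lengthAdditive (mul_mem hu hp),
    hC.lengthAdditive hp, ← add_assoc, add_left_inj]

theorem exists_mem_parabolic_eq_mul {x : W} (hC : IsRibbon cs I C) (hp : p ∈ parabolic cs I)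
    (hq : q ∈ parabolic cs I) (hpx : WeakLE cs (p * C) x) (hxq : WeakLE cs x (q * C)) :
    ∃ r ∈ parabolic cs I, x = r * C := by
  have hle := hpx.inv_mul_weakLE_inv_mul hxq
  have hpq : (p * C)⁻¹ * (q * C) = C⁻¹ * (p⁻¹ * q * C) := by group
  rw [hpq] at hle
  have hmem := conj_mem_parabolic
    (hle.mem_parabolic (hC.inv_conj_mem_parabolic (mul_mem (inv_mem hp) hq)))
  exact ⟨_, mul_mem hp hmem, by group⟩

theorem maxPrefix_mul (hC : IsRibbon cs I C) (hu : u ∈ parabolic cs I) (hA : A ∈ parabolic cs I) :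
    maxPrefix cs u (A * C) = maxPrefix cs u A * C := by
  have hm : maxPrefix cs u A ∈ parabolic cs I := (maxPrefix_weakLE u A).mem_parabolic hA
  have hle : WeakLE cs (maxPrefix cs u A * C) (maxPrefix cs u (A * C)) :=
    weakLE_maxPrefix ((hC.mul_weakLE_mul_iff hm hA).mpr (maxPrefix_weakLE u A))
      ((hC.lengthAdditive_mul_iff hu hm).mpr (lengthAdditive_maxPrefix u A))
  have hAC := maxPrefix_weakLE (cs := cs) u (A * C)
  have hadd := lengthAdditive_maxPrefix (cs := cs) u (A * C)
  obtain ⟨q, hq, hqC⟩ := hC.exists_mem_parabolic_eq_mul hm hA hle hAC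
  rw [hqC] at hle hAC hadd ⊢
  exact ((hC.mul_weakLE_mul_iff hq hm).mpr (weakLE_maxPrefix ((hC.mul_weakLE_mul_iff hq hA).mp hAC)
    ((hC.lengthAdditive_mul_iff hu hq).mp hadd))).antisymm hle

theorem headMul_mul (hC : IsRibbon cs I C) (hu : u ∈ parabolic cs I) (hA : A ∈ parabolic cs I) :
    headMul cs u (A * C) = headMul cs u A * C := by
  rw [headMul, headMul, hC.maxPrefix_mul hu hA, mul_assoc]

end IsRibbon

theorem headMul_mem_parabolic (hu : u ∈ parabolic cs I) (hA : A ∈ parabolic cs I) :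
    headMul cs u A ∈ parabolic cs I :=
  mul_mem hu ((maxPrefix_weakLE u A).mem_parabolic hA)

end Ribbon

end ArtinTits

namespace ArtinTitsMonoid

open ArtinTits

section Word

variable {B : Type*} {M : CoxeterMatrix B}

variable (M) in
/-- The element of the Artin–Tits monoid represented by a word. -/
def ofWord (ω : List B) : ArtinTitsMonoid M := (braidCon M).mk' (FreeMonoid.ofList ω)

theorem ofWord_nil : ofWord M [] = 1 := map_one (braidCon M).mk'

theorem ofWord_append (ω ω' : List B) : ofWord M (ω ++ ω') = ofWord M ω * ofWord M ω' :=
  map_mul (braidCon M).mk' (FreeMonoid.ofList ω) (FreeMonoid.ofList ω')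

theorem ofWord_singleton (i : B) : ofWord M [i] = of M i := rfl

theorem ofWord_cons (i : B) (ω : List B) : ofWord M (i :: ω) = of M i * ofWord M ω :=
  ofWord_append [i] ω

theorem ofWord_surjective : Function.Surjective (ofWord M) :=
  (braidCon M).mk'_surjective.comp FreeMonoid.ofList.surjective

theorem ofWord_altWord_comm {i j : B} (hij : i ≠ j) (hM : M i j ≠ 0) :
    ofWord M (altWord i j (M i j)) = ofWord M (altWord j i (M i j)) :=
  (braidCon M).eq.mpr (ConGen.Rel.of _ _ ⟨i, j, hij, hM, rfl, rfl⟩)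

variable {N : Type*} [Monoid N]

theorem braidCon_le_ker {f : B → N} (hf : ∀ i j,
    ((altWord i j (M i j)).map f).prod = ((altWord j i (M i j)).map f).prod) :
    braidCon M ≤ Con.ker (FreeMonoid.lift f) := by
  refine Con.conGen_le.mpr ?_
  rintro _ _ ⟨i, j, -, -, rfl, rfl⟩
  simpa only [Con.ker_rel, FreeMonoid.lift_ofList] using hf i j

/-- The homomorphism out of the Artin–Tits monoid extending a map on the generators that satisfies
the braid relations. -/
def lift (f : B → N) (hf : ∀ i j,
    ((altWord i j (M i j)).map f).prod = ((altWord j i (M i j)).map f).prod) :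
    ArtinTitsMonoid M →* N :=
  (braidCon M).lift (FreeMonoid.lift f) (braidCon_le_ker hf)

theorem lift_ofWord {f : B → N} (hf : ∀ i j,
    ((altWord i j (M i j)).map f).prod = ((altWord j i (M i j)).map f).prod) (ω : List B) :
    lift f hf (ofWord M ω) = (ω.map f).prod :=
  (Con.lift_mk' (braidCon_le_ker hf) (FreeMonoid.ofList ω)).trans (FreeMonoid.lift_ofList f ω)

variable (M) in
/-- The common length of the words representing an element of the Artin–Tits monoid. -/
def wordLength : ArtinTitsMonoid M →* Multiplicative ℕ :=
  lift (fun _ => Multiplicative.ofAdd 1) fun i j => by simp [length_altWord]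

theorem wordLength_ofWord (ω : List B) :
    wordLength M (ofWord M ω) = Multiplicative.ofAdd ω.length := by
  simp [wordLength, lift_ofWord, ← ofAdd_nsmul]

theorem length_eq_of_ofWord_eq {ω ω' : List B} (h : ofWord M ω = ofWord M ω') :
    ω.length = ω'.length := by
  have := congrArg (wordLength M) h
  rwa [wordLength_ofWord, wordLength_ofWord, Multiplicative.ofAdd.injective.eq_iff] at this

variable {W : Type*} [Group W] (cs : CoxeterSystem M W)

/-- The projection of the Artin–Tits monoid to the Coxeter group. -/
def toCoxeter : ArtinTitsMonoid M →* W := lift cs.simple (wordProd_altWord_comm cs)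

theorem toCoxeter_ofWord (ω : List B) : toCoxeter cs (ofWord M ω) = cs.wordProd ω :=
  lift_ofWord (wordProd_altWord_comm cs) ω

end Word

section Matsumoto

variable {B : Type*} {M : CoxeterMatrix B} {W : Type*} [Group W] {cs : CoxeterSystem M W}
variable {ω ω' : List B} {u v : W} {i j : B}

theorem exists_ofWord_cons_eq_ofWord_cons (hi : cs.IsLeftDescent u i) (hj : cs.IsLeftDescent u j)
    (hij : i ≠ j) : ∃ α β, cs.IsReduced (i :: α) ∧ cs.IsReduced (j :: β) ∧
      cs.wordProd (i :: α) = u ∧ cs.wordProd (j :: β) = u ∧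
      ofWord M (i :: α) = ofWord M (j :: β) := by
  have hM : M i j ≠ 0 := ne_zero_of_isLeftDescent hi hj
  obtain ⟨ζ, hζ, hu⟩ := cs.exists_isReduced ((cs.wordProd (altWord i j (M i j)))⁻¹ * u)
  have hadd : LengthAdditive cs (cs.wordProd (altWord i j (M i j))) (cs.wordProd ζ) := by
    rw [← hu]
    exact wordProd_altWord_weakLE hi hj (Or.inr le_rfl)
  have hred := isReduced_append (isReduced_altWord cs (Or.inr le_rfl)) hζ hadd
  have hprod : cs.wordProd (altWord i j (M i j) ++ ζ) = u := by
    rw [cs.wordProd_append, ← hu, mul_inv_cancel_left]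
  have hprod' : cs.wordProd (altWord j i (M i j) ++ ζ) = u := by
    rw [cs.wordProd_append, ← wordProd_altWord_comm, ← cs.wordProd_append, hprod]
  have hred' : cs.IsReduced (altWord j i (M i j) ++ ζ) := by
    rw [CoxeterSystem.IsReduced, hprod', ← hprod, hred.eq]
    simp only [List.length_append, length_altWord]
  have hbraid : ofWord M (altWord i j (M i j) ++ ζ) = ofWord M (altWord j i (M i j) ++ ζ) := by
    rw [ofWord_append, ofWord_append, ofWord_altWord_comm hij hM]
  obtain ⟨k, hk⟩ := Nat.exists_eq_succ_of_ne_zero hM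
  rw [hk] at hred hprod hprod' hred' hbraid
  exact ⟨_, _, hred, hred', hprod, hprod', hbraid⟩

theorem ofWord_eq_of_wordProd_eq (hω : cs.IsReduced ω) (hω' : cs.IsReduced ω')
    (h : cs.wordProd ω = cs.wordProd ω') : ofWord M ω = ofWord M ω' := by
  induction hn : ω.length generalizing ω ω' with
  | zero =>
    have hn' : ω'.length = 0 := by rw [← hω'.eq, ← h, hω.eq, hn]
    rw [List.length_eq_zero_iff.mp hn, List.length_eq_zero_iff.mp hn']
  | succ n ih =>
    have hn' : ω'.length = n + 1 := by rw [← hω'.eq, ← h, hω.eq, hn]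
    have same_head : ∀ {i α β}, cs.IsReduced (i :: α) → cs.IsReduced (i :: β) →
        cs.wordProd (i :: α) = cs.wordProd (i :: β) → (i :: α).length = n + 1 →
        ofWord M (i :: α) = ofWord M (i :: β) := by
      intro i α β hα hβ hαβ hlen
      rw [cs.wordProd_cons, cs.wordProd_cons, mul_right_inj] at hαβ
      rw [ofWord_cons, ofWord_cons, ih ((isReduced_cons_iff cs).mp hα).1
        ((isReduced_cons_iff cs).mp hβ).1 hαβ (Nat.succ.inj hlen)]
    obtain ⟨i, α, rfl⟩ := List.exists_cons_of_length_eq_add_one hn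
    obtain ⟨j, β, rfl⟩ := List.exists_cons_of_length_eq_add_one hn'
    obtain rfl | hij := eq_or_ne i j
    · exact same_head hω hω' h hn
    obtain ⟨α', β', hα', hβ', hα, hβ, heq⟩ := exists_ofWord_cons_eq_ofWord_cons
      (isLeftDescent_of_isReduced_cons hω) (h ▸ isLeftDescent_of_isReduced_cons hω') hij
    exact (same_head hω hα' hα.symm hn).trans
      (heq.trans (same_head hω' hβ' (h.symm.trans hβ.symm) hn').symm)

variable (cs) in
/-- The canonical section of the projection to `W`, sending `u` to the product of the letters of
any reduced word for `u`. -/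
noncomputable def titsSection (u : W) : ArtinTitsMonoid M :=
  ofWord M (cs.exists_isReduced u).choose

theorem titsSection_wordProd (hω : cs.IsReduced ω) :
    titsSection cs (cs.wordProd ω) = ofWord M ω :=
  have h := (cs.exists_isReduced (cs.wordProd ω)).choose_spec
  ofWord_eq_of_wordProd_eq h.1 hω h.2.symm

theorem titsSection_one : titsSection cs 1 = 1 := by
  have h : cs.IsReduced [] := by simp [CoxeterSystem.IsReduced]
  rw [← cs.wordProd_nil, titsSection_wordProd h, ofWord_nil]

theorem titsSection_simple (i : B) : titsSection cs (cs.simple i) = of M i := by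
  have h : cs.IsReduced [i] := by simp [CoxeterSystem.IsReduced]
  rw [← cs.wordProd_singleton, titsSection_wordProd h, ofWord_singleton]

theorem titsSection_mul (h : LengthAdditive cs u v) :
    titsSection cs (u * v) = titsSection cs u * titsSection cs v := by
  obtain ⟨ω, hω, rfl⟩ := cs.exists_isReduced u
  obtain ⟨ω', hω', rfl⟩ := cs.exists_isReduced v
  rw [← cs.wordProd_append, titsSection_wordProd (isReduced_append hω hω' h),
    titsSection_wordProd hω, titsSection_wordProd hω', ofWord_append]

theorem titsSection_dvd_titsSection (h : WeakLE cs u v) :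
    titsSection cs u ∣ titsSection cs v :=
  ⟨titsSection cs (u⁻¹ * v), by rw [← titsSection_mul h, mul_inv_cancel_left]⟩

end Matsumoto

section Head

variable {B : Type*} {M : CoxeterMatrix B} {W : Type*} [Group W] {cs : CoxeterSystem M W}
variable {I : Set B} {u C : W} {w x v : ArtinTitsMonoid M} {i j : B}

variable (cs) in
/-- The action of a generator of the Artin–Tits monoid on heads. -/
noncomputable def headStep (i : B) : Function.End W := headMul cs (cs.simple i)

theorem prod_map_headStep {ω : List B} (hω : cs.IsReduced ω) :
    (ω.map (headStep cs)).prod = headMul cs (cs.wordProd ω) := by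
  induction ω with
  | nil =>
    funext y
    rw [cs.wordProd_nil, headMul_of_lengthAdditive lengthAdditive_one_left, one_mul]
    rfl
  | cons i ω ih =>
    obtain ⟨hω', hi⟩ := (isReduced_cons_iff cs).mp hω
    funext y
    rw [List.map_cons, List.prod_cons, ih hω', cs.wordProd_cons,
      headMul_mul (lengthAdditive_simple_iff.mpr hi)]
    rfl

theorem prod_map_headStep_altWord_comm (cs : CoxeterSystem M W) (i j : B) :
    ((altWord i j (M i j)).map (headStep cs)).prod =
      ((altWord j i (M i j)).map (headStep cs)).prod := by
  rw [prod_map_headStep (isReduced_altWord cs (Or.inr le_rfl)),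
    prod_map_headStep (isReduced_altWord cs (Or.inr (M.symmetric i j).le)),
    wordProd_altWord_comm]

variable (cs) in
/-- The action of the Artin–Tits monoid on `W` for which `x` sends the head of `v` to the head of
`x * v`. -/
noncomputable def headAction : ArtinTitsMonoid M →* Function.End W :=
  lift (headStep cs) (prod_map_headStep_altWord_comm cs)

theorem headAction_titsSection (u : W) : headAction cs (titsSection cs u) = headMul cs u := by
  obtain ⟨ω, hω, rfl⟩ := cs.exists_isReduced u
  rw [titsSection_wordProd hω, headAction, lift_ofWord, prod_map_headStep hω]

theorem headAction_of (i : B) : headAction cs (of M i) = headMul cs (cs.simple i) := by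
  rw [← titsSection_simple (cs := cs), headAction_titsSection]

theorem headAction_mul (x v : ArtinTitsMonoid M) (y : W) :
    headAction cs (x * v) y = headAction cs x (headAction cs v y) := by
  rw [map_mul]
  rfl

variable (cs) in
/-- The head of an element of the Artin–Tits monoid, that is, its greatest prefix in `W`. -/
noncomputable def head (x : ArtinTitsMonoid M) : W := headAction cs x 1

theorem head_mul (x v : ArtinTitsMonoid M) : head cs (x * v) = headAction cs x (head cs v) :=
  headAction_mul x v 1

theorem head_of_mul (i : B) (x : ArtinTitsMonoid M) :
    head cs (of M i * x) = headMul cs (cs.simple i) (head cs x) := by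
  rw [head_mul, headAction_of]

theorem head_one : head cs (1 : ArtinTitsMonoid M) = 1 := by
  rw [head, map_one]
  rfl

theorem head_titsSection (u : W) : head cs (titsSection cs u) = u := by
  rw [head, headAction_titsSection, headMul_of_lengthAdditive lengthAdditive_one_right, mul_one]

theorem titsSection_headMul_dvd (u y : W) :
    titsSection cs (headMul cs u y) ∣ titsSection cs u * titsSection cs y := by
  rw [headMul, titsSection_mul (lengthAdditive_maxPrefix u y)]
  exact mul_dvd_mul_left _ (titsSection_dvd_titsSection (maxPrefix_weakLE u y))

theorem titsSection_head_dvd (x : ArtinTitsMonoid M) : titsSection cs (head cs x) ∣ x := by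
  obtain ⟨ω, rfl⟩ := ofWord_surjective x
  induction ω with
  | nil => rw [ofWord_nil, head_one, titsSection_one]
  | cons i ω ih =>
    rw [ofWord_cons, head_of_mul]
    refine (titsSection_headMul_dvd _ _).trans ?_
    rw [titsSection_simple]
    exact mul_dvd_mul_left _ ih

theorem titsSection_dvd_iff : titsSection cs u ∣ x ↔ WeakLE cs u (head cs x) := by
  refine ⟨?_, fun h => (titsSection_dvd_titsSection h).trans (titsSection_head_dvd x)⟩
  rintro ⟨z, rfl⟩
  rw [head_mul, headAction_titsSection]
  exact weakLE_headMul u (head cs z)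

theorem of_dvd_iff (cs : CoxeterSystem M W) : of M i ∣ x ↔ cs.IsLeftDescent (head cs x) i := by
  rw [← titsSection_simple (cs := cs), titsSection_dvd_iff, simple_weakLE_iff]

theorem exists_simple_mul_head_eq (hi : ¬of M i ∣ w) (hij : of M i * w = w * of M j) :
    ∃ k, cs.simple i * head cs w = head cs w * cs.simple k := by
  have hadd : LengthAdditive cs (cs.simple i) (head cs w) :=
    lengthAdditive_simple_iff.mpr (mt (of_dvd_iff cs).mpr hi)
  have hle : WeakLE cs (head cs w) (cs.simple i * head cs w) := by
    rw [← headMul_of_lengthAdditive hadd, ← head_of_mul, hij, ← titsSection_dvd_iff]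
    exact (titsSection_head_dvd w).mul_right _
  rw [weakLE_iff, hadd, cs.length_simple, add_comm, add_right_inj, eq_comm,
    cs.length_eq_one_iff] at hle
  obtain ⟨k, hk⟩ := hle
  exact ⟨k, by rw [← hk, mul_inv_cancel_left]⟩

theorem isRibbon_head (hred : ∀ i ∈ I, ¬of M i ∣ w)
    (hconj : ∀ i ∈ I, ∃ j, of M i * w = w * of M j) : IsRibbon cs I (head cs w) where
  not_isLeftDescent i hi := mt (of_dvd_iff cs).mpr (hred i hi)
  exists_simple_mul_eq i hi :=
    let ⟨_, hij⟩ := hconj i hi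
    exists_simple_mul_head_eq (hred i hi) hij

theorem head_mem_parabolic (hv : v ∈ Submonoid.closure (of M '' I)) :
    head cs v ∈ parabolic cs I := by
  induction hv using Submonoid.closure_induction_left with
  | one => exact head_one (cs := cs) ▸ one_mem _
  | mul_left _ hi v _ ih =>
    obtain ⟨i, hi, rfl⟩ := hi
    rw [head_of_mul]
    exact headMul_mem_parabolic (simple_mem_parabolic hi) ih

theorem headAction_eq_head_mul (hC : IsRibbon cs I C)
    (hv : v ∈ Submonoid.closure (of M '' I)) : headAction cs v C = head cs v * C := by
  induction hv using Submonoid.closure_induction_left with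
  | one =>
    rw [head_one, one_mul, map_one]
    rfl
  | mul_left _ hi v hv ih =>
    obtain ⟨i, hi, rfl⟩ := hi
    rw [headAction_mul, ih, head_of_mul, headAction_of,
      hC.headMul_mul (simple_mem_parabolic hi) (head_mem_parabolic hv)]

end Head

section IsHead

variable {B : Type*} {M : CoxeterMatrix B} {W : Type*} [Group W] {cs : CoxeterSystem M W}
variable {l : List B} {x d : ArtinTitsMonoid M}

/-- An element of the Artin–Tits monoid is simple if it is represented by a reduced word. When `W`
is finite, these are the divisors of the Garside element. -/
def IsSimple (cs : CoxeterSystem M W) (x : ArtinTitsMonoid M) : Prop :=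
  ∃ ω, cs.IsReduced ω ∧ ofWord M ω = x

/-- `d` is the greatest simple left divisor of `x`. When `W` is finite, this is the left gcd of `x`
and the Garside element. -/
structure IsHead (cs : CoxeterSystem M W) (x d : ArtinTitsMonoid M) : Prop where
  isSimple : IsSimple cs d
  dvd : d ∣ x
  dvd_of_isSimple : ∀ e, IsSimple cs e → e ∣ x → e ∣ d

theorem isSimple_iff : IsSimple cs x ↔ ∃ u, titsSection cs u = x := by
  refine ⟨fun ⟨ω, hω, hx⟩ => ⟨cs.wordProd ω, by rw [titsSection_wordProd hω, hx]⟩, ?_⟩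
  rintro ⟨u, rfl⟩
  obtain ⟨ω, hω, rfl⟩ := cs.exists_isReduced u
  exact ⟨ω, hω, (titsSection_wordProd hω).symm⟩

theorem IsSimple.of_dvd (hx : IsSimple cs x) (hd : d ∣ x) : IsSimple cs d := by
  obtain ⟨ω, hω, rfl⟩ := hx
  obtain ⟨e, he⟩ := hd
  obtain ⟨α, rfl⟩ := ofWord_surjective d
  obtain ⟨β, rfl⟩ := ofWord_surjective e
  rw [← ofWord_append] at he
  have hprod := congrArg (toCoxeter cs) he
  rw [toCoxeter_ofWord, toCoxeter_ofWord] at hprod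
  have hαβ : cs.IsReduced (α ++ β) := by
    rw [CoxeterSystem.IsReduced, ← hprod, hω.eq, length_eq_of_ofWord_eq he]
  exact ⟨α, by simpa only [List.take_left] using hαβ.take α.length, rfl⟩

theorem isHead_titsSection_head (x : ArtinTitsMonoid M) :
    IsHead cs x (titsSection cs (head cs x)) where
  isSimple := isSimple_iff.mpr ⟨_, rfl⟩
  dvd := titsSection_head_dvd x
  dvd_of_isSimple e he hex := by
    obtain ⟨u, rfl⟩ := isSimple_iff.mp he
    exact titsSection_dvd_titsSection (titsSection_dvd_iff.mp hex)

theorem IsHead.eq_titsSection_head (h : IsHead cs x d) : d = titsSection cs (head cs x) := by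
  obtain ⟨hd, hdx, hmax⟩ := h
  obtain ⟨u, rfl⟩ := isSimple_iff.mp hd
  have hle := hmax _ (isHead_titsSection_head x).isSimple (titsSection_head_dvd x)
  rw [titsSection_dvd_iff, head_titsSection] at hle
  rw [(titsSection_dvd_iff.mp hdx).antisymm hle]

theorem dvd_ofWord_iff_isSimple (hl : cs.IsReduced l)
    (hmax : ∀ u, cs.length u ≤ cs.length (cs.wordProd l)) : d ∣ ofWord M l ↔ IsSimple cs d := by
  refine ⟨IsSimple.of_dvd ⟨l, hl, rfl⟩, fun hd => ?_⟩
  obtain ⟨u, rfl⟩ := isSimple_iff.mp hd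
  rw [← titsSection_wordProd hl]
  exact titsSection_dvd_titsSection (weakLE_of_forall_length_le hmax u)

theorem isLeftGcd_ofWord_iff_isHead (hl : cs.IsReduced l)
    (hmax : ∀ u, cs.length u ≤ cs.length (cs.wordProd l)) :
    IsLeftGcd x (ofWord M l) d ↔ IsHead cs x d := by
  have hdvd {e} : e ∣ ofWord M l ↔ IsSimple cs e := dvd_ofWord_iff_isSimple hl hmax
  exact ⟨fun ⟨hx, hd, h⟩ => ⟨hdvd.mp hd, hx, fun e he hex => h e hex (hdvd.mpr he)⟩,
    fun ⟨hd, hx, h⟩ => ⟨hx, hdvd.mpr hd, fun e hex he => h e (hdvd.mp he) hex⟩⟩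

end IsHead

end ArtinTitsMonoid

open ArtinTits ArtinTitsMonoid in
theorem artin_head_of_parabolic_product_general {B : Type*} (M : CoxeterMatrix B) {W : Type*}
    [Group W] (cs : CoxeterSystem M W) (I : Set B) (w : ArtinTitsMonoid M)
    (hred : ∀ s ∈ I, ¬of M s ∣ w) (hconj : ∀ s ∈ I, ∃ t, of M s * w = w * of M t)
    (v : ArtinTitsMonoid M) (hv : v ∈ Submonoid.closure (of M '' I)) (a c : ArtinTitsMonoid M)
    (ha : IsHead cs v a) (hc : IsHead cs w c) : IsHead cs (v * w) (a * c) := by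
  have hC : IsRibbon cs I (head cs w) := isRibbon_head hred hconj
  have hmul : head cs (v * w) = head cs v * head cs w := by
    rw [head_mul, headAction_eq_head_mul hC hv]
  have hadd : LengthAdditive cs (head cs v) (head cs w) :=
    hC.lengthAdditive (head_mem_parabolic hv)
  rw [ha.eq_titsSection_head, hc.eq_titsSection_head, ← titsSection_mul hadd, ← hmul]
  exact isHead_titsSection_head (v * w)

/-- In the Artin–Tits monoid of a finite Coxeter system with Garside element `Δ` (the image
of a reduced word for the longest element `w₀`), let `I ⊆ S`, let `w` be divisible by no
element of `I` and conjugate each element of `I` to an element of `S`, and let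
`v ∈ B_I⁺`.  If `a` is a left gcd of `v` and `Δ` and `c` is a left gcd of `w` and `Δ`,
then `a·c` is a left gcd of `v·w` and `Δ`. -/
theorem artin_head_of_parabolic_product
    {B : Type*} (M : CoxeterMatrix B) {W : Type*} [Group W] (cs : CoxeterSystem M W)
    [Finite W]
    (w₀ : W) (hw₀ : ∀ u : W, cs.length u ≤ cs.length w₀)
    (l : List B) (hl : cs.wordProd l = w₀) (hlen : l.length = cs.length w₀)
    (Δ : ArtinTitsMonoid M) (hΔ : Δ = (braidCon M).mk' (FreeMonoid.ofList l))
    (I : Set B) (w : ArtinTitsMonoid M)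
    (hred : ∀ s ∈ I, ¬ ∃ u, w = ArtinTitsMonoid.of M s * u)
    (hconj : ∀ s ∈ I, ∃ t : B, ArtinTitsMonoid.of M s * w = w * ArtinTitsMonoid.of M t)
    (v : ArtinTitsMonoid M) (hv : v ∈ Submonoid.closure (ArtinTitsMonoid.of M '' I))
    (a c : ArtinTitsMonoid M)
    (ha : IsLeftGcd v Δ a) (hc : IsLeftGcd w Δ c) :
    IsLeftGcd (v * w) Δ (a * c) := by
  subst hl hΔ
  have hgcd {x d} := ArtinTitsMonoid.isLeftGcd_ofWord_iff_isHead (x := x) (d := d) hlen.symm hw₀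
  exact hgcd.mpr (artin_head_of_parabolic_product_general M cs I w hred hconj v hv a c
    (hgcd.mp ha) (hgcd.mp hc))
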